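/- Let S and T be finite nonempty sets and let ψ₁,…,ψ_n : S × T → ℂ. For ψ : S × T → ℂ define γ₂(ψ) as the infimum of sup_{s∈S} ‖x(s)‖ · sup_{t∈T} ‖y(t)‖ over all d ∈ ℕ and maps x : S → ℂ^d, y : T → ℂ^d with ψ(s,t) = ⟪x(s), y(t)⟫ for all (s,t). Let μ be the product over Fin n of the normalized Haar probability measure on the circle 𝕋 = {z ∈ ℂ : |z|=1}. Assume ∫_{𝕋^n} γ₂(Σ_{k=1}^n z_k ψ_k) dμ(z) < 1. Then there is a decomposition ψ_k = A_k + B_k (k = 1,…,n) of functions on S × T such that: (a) there exist d ∈ ℕ and maps α_k : S → ℂ^d (k = 1,…,n) and β : T → ℂ^d with A_k(s,t) = ⟪α_k(s), β(t)⟫ for all k, s, t, sup_{s∈S} Σ_{k=1}^n ‖α_k(s)‖² ≤ 1 and sup_{t∈T} ‖β(t)‖ ≤ 1; and (b) there exist d′ ∈ ℕ and maps γ : S → ℂ^{d′} and δ_k : T → ℂ^{d′} (k = 1,…,n) with B_k(s,t) = ⟪γ(s), δ_k(t)⟫ for all k, s, t, sup_{s∈S} ‖γ(s)‖ ≤ 1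 and sup_{t∈T} Σ_{k=1}^n ‖δ_k(t)‖² ≤ 1. -/

import Mathlib

open scoped ENNReal NNReal
open MeasureTheory ContinuousLinearMap

noncomputable section

/-- `ψ : S × T → ℂ` is a Schur multiplier of norm at most `C`: for every bounded operator
`A : ℓ²(S) → ℓ²(T)` there is a bounded `B : ℓ²(S) → ℓ²(T)` whose matrix entries are
`ψ(s,t) · A(s,t)` and with `‖B‖ ≤ C‖A‖`. -/
def IsSchurMultiplier {S T : Type*} (ψ : S × T → ℂ) (C : ℝ) : Prop :=
  letI := Classical.decEq S
  letI := Classical.decEq T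
  ∀ A : lp (fun _ : S => ℂ) 2 →L[ℂ] lp (fun _ : T => ℂ) 2,
    ∃ B : lp (fun _ : S => ℂ) 2 →L[ℂ] lp (fun _ : T => ℂ) 2,
      (∀ (s : S) (t : T),
        (inner (𝕜 := ℂ) (lp.single 2 t 1) (B (lp.single 2 s 1)))
          = ψ (s, t) * inner (𝕜 := ℂ) (lp.single 2 t 1) (A (lp.single 2 s 1))) ∧
      ‖B‖ ≤ C * ‖A‖

/-- The `γ₂` norm of a kernel `ψ : S × T → ℂ`: the infimum of
`sup_s ‖x(s)‖ · sup_t ‖y(t)‖` over all finite-dimensional Hilbert space factorizations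
`ψ(s,t) = ⟪x(s), y(t)⟫`. -/
def gamma2 {S T : Type*} (ψ : S × T → ℂ) : ℝ :=
  sInf { c : ℝ |
    ∃ (d : ℕ) (x : S → EuclideanSpace ℂ (Fin d)) (y : T → EuclideanSpace ℂ (Fin d)),
      (∀ s t, ψ (s, t) = inner (𝕜 := ℂ) (x s) (y t)) ∧
      c = (⨆ s, ‖x s‖) * (⨆ t, ‖y t‖) }

theorem aux_filtration {S T H : Type*} [NormedAddCommGroup H] [InnerProductSpace ℂ H]
    [FiniteDimensional ℂ H] (N : ℕ) (X : ℕ → S → H) (Y : ℕ → T → H)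
    (h0 : ∀ i j s t, i < j → j < N → inner ℂ (X i s) (Y j t) = 0) :
    ∃ D : ℕ → H → H,
      (∀ i s v, i < N → ∑ l ∈ Finset.range N, inner ℂ (D l (X i s)) (D l v) = inner ℂ (X i s) v) ∧
      (∀ v, ∑ l ∈ Finset.range N, ‖D l v‖ ^ 2 ≤ ‖v‖ ^ 2) ∧
      (∀ l i s, i < l → D l (X i s) = 0) ∧
      (∀ l j t, l < j → j < N → D l (Y j t) = 0) := by
  classical
  let E : ℕ → Submodule ℂ H := fun l => Submodule.span ℂ {v | ∃ i s, i < l ∧ X i s = v}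
  have hmono : ∀ l, E l ≤ E (l + 1) := by
    intro l
    apply Submodule.span_mono
    rintro v ⟨i, s, hi, rfl⟩
    exact ⟨i, s, by omega, rfl⟩
  let P : ℕ → H →L[ℂ] H := fun l => (E l).starProjection
  have hPX : ∀ l i s, i < l → P l (X i s) = X i s := by
    intro l i s hi
    exact Submodule.starProjection_eq_self_iff.2 (Submodule.subset_span ⟨i, s, hi, rfl⟩)
  have hPY : ∀ l j t, l ≤ j → j < N → P l (Y j t) = 0 := by
    intro l j t hl hj
    refine ((E l).starProjection_apply_eq_zero_iff).2 ?_
    rw [Submodule.mem_orthogonal]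
    intro u hu
    induction hu using Submodule.span_induction with
    | mem x hx =>
      obtain ⟨i, s, hi, rfl⟩ := hx
      exact h0 i j s t (by omega) hj
    | zero => simp
    | add x y _ _ hx hy => rw [inner_add_left, hx, hy, add_zero]
    | smul a x _ hx => rw [inner_smul_left, hx, mul_zero]
  have hP0 : ∀ v, P 0 v = 0 := by
    intro v
    have : E 0 = ⊥ := by
      simp [E]
    refine ((E 0).starProjection_apply_eq_zero_iff).2 ?_
    rw [this]; simp
  have hPP : ∀ l v, P l (P (l + 1) v) = P l v := by
    intro l v
    have := Submodule.starProjection_comp_starProjection_of_le (hmono l)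
    exact congrArg (fun f => f v) this
  have hPid : ∀ l v, P l (P l v) = P l v := by
    intro l v
    exact Submodule.starProjection_eq_self_iff.2 (Submodule.starProjection_apply_mem _ _)
  have hsym : ∀ l u v, inner ℂ (P l u) v = inner ℂ u (P l v) := fun l u v =>
    Submodule.inner_starProjection_left_eq_right _ u v
  have hstep : ∀ l u v, inner ℂ (P (l + 1) u - P l u) (P (l + 1) v - P l v)
      = inner ℂ (P (l + 1) u) v - inner ℂ (P l u) v := by
    intro l u v
    rw [inner_sub_left, inner_sub_right, inner_sub_right]
    rw [← hsym (l+1) (P (l+1) u) v, hPid, ← hsym l (P (l+1) u) v, hPP, ← hsym l (P l u) v, hPid,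
      hsym l u (P (l+1) v), hPP, ← hsym]
    ring
  have htel : ∀ u v, ∑ l ∈ Finset.range N, inner ℂ (P (l + 1) u - P l u) (P (l + 1) v - P l v)
      = inner ℂ (P N u) v := by
    intro u v
    simp_rw [hstep]
    rw [Finset.sum_range_sub (fun l => inner ℂ (P l u) v), hP0]
    simp
  refine ⟨fun l v => P (l + 1) v - P l v, ?_, ?_, ?_, ?_⟩
  · intro i s v hi
    rw [htel, hPX N i s hi]
  · intro v
    have h1 := htel v v
    rw [← hPid N v, hsym N (P N v) v] at h1
    simp only [inner_self_eq_norm_sq_to_K] at h1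
    have h2 : (∑ l ∈ Finset.range N, ‖P (l + 1) v - P l v‖ ^ 2) = ‖P N v‖ ^ 2 := by
      exact_mod_cast h1
    rw [h2]
    have := (E N).norm_starProjection_apply_le v
    exact pow_le_pow_left₀ (norm_nonneg _) this 2
  · intro l i s hi
    simp only
    rw [hPX l i s hi, hPX (l+1) i s (by omega), sub_self]
  · intro l j t hl hj
    simp only
    rw [hPY l j t hl.le hj, hPY (l+1) j t hl hj, sub_self]

theorem aux_euclid {H : Type*} [NormedAddCommGroup H] [InnerProductSpace ℂ H]
    [FiniteDimensional ℂ H] :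
    ∃ (d : ℕ) (f : H → EuclideanSpace ℂ (Fin d)), (∀ x y, inner ℂ (f x) (f y) = inner ℂ x y) ∧
      ∀ x, ‖f x‖ = ‖x‖ :=
  ⟨_, (stdOrthonormalBasis ℂ H).repr, fun x y => LinearIsometryEquiv.inner_map_map _ x y,
    fun x => LinearIsometryEquiv.norm_map _ x⟩

theorem aux_shift {V : Type*} [AddCommMonoid V] (M a N : ℕ) (h : M + a ≤ N) (f : ℕ → V) :
    ∑ i ∈ Finset.range N, (if a ≤ i ∧ i < M + a then f i else 0)
      = ∑ j ∈ Finset.range M, f (j + a) := by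
  rw [← Finset.sum_filter]
  symm
  refine Finset.sum_bij (fun j _ => j + a) ?_ ?_ ?_ ?_
  · intro j hj; simp at *; omega
  · intro j _ k _ h; simpa using h
  · intro i hi
    simp at hi
    exact ⟨i - a, by simp; omega, by omega⟩
  · intros; rfl

theorem aux_uniq (n u : ℕ) (c : ℝ) (hc : 0 ≤ c) :
    ∑ k : Fin n, (if 3 ^ (k : ℕ) ≤ 2 * u ∧ u ≤ 3 ^ (k : ℕ) then c else 0) ≤ c := by
  rw [← Finset.sum_filter, Finset.sum_const, nsmul_eq_mul]
  have : (Finset.univ.filter fun k : Fin n => 3 ^ (k : ℕ) ≤ 2 * u ∧ u ≤ 3 ^ (k : ℕ)).card ≤ 1 := by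
    rw [Finset.card_le_one]
    have key : ∀ a b : ℕ, 3 ^ a ≤ 2 * u → u ≤ 3 ^ a → 3 ^ b ≤ 2 * u → u ≤ 3 ^ b → ¬ a < b := by
      intro a b h1 h2 h3 h4 hab
      have : 3 ^ (a + 1) ≤ 3 ^ b := Nat.pow_le_pow_right (by norm_num) hab
      have h5 : 0 < 3 ^ a := by positivity
      rw [pow_succ] at this
      omega
    intro a ha b hb
    simp at ha hb
    have h1 := key a b ha.1 ha.2 hb.1 hb.2
    have h2 := key b a hb.1 hb.2 ha.1 ha.2
    ext; omega
  have h' : ((Finset.univ.filter fun k : Fin n =>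
      3 ^ (k : ℕ) ≤ 2 * u ∧ u ≤ 3 ^ (k : ℕ)).card : ℝ) ≤ 1 := by exact_mod_cast this
  nlinarith

def AuxDec {S T : Type*} (n : ℕ) (ψ : Fin n → S × T → ℂ) : Prop :=
    ∃ A B : Fin n → S × T → ℂ,
      (∀ k p, ψ k p = A k p + B k p) ∧
      (∃ (d : ℕ) (α : Fin n → S → EuclideanSpace ℂ (Fin d))
          (β : T → EuclideanSpace ℂ (Fin d)),
        (∀ k s t, A k (s, t) = inner (𝕜 := ℂ) (α k s) (β t)) ∧
        (∀ s, ∑ k, ‖α k s‖ ^ 2 ≤ 1) ∧ (∀ t, ‖β t‖ ≤ 1)) ∧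
      (∃ (d' : ℕ) (γ : S → EuclideanSpace ℂ (Fin d'))
          (δ : Fin n → T → EuclideanSpace ℂ (Fin d')),
        (∀ k s t, B k (s, t) = inner (𝕜 := ℂ) (γ s) (δ k t)) ∧
        (∀ s, ‖γ s‖ ≤ 1) ∧ (∀ t, ∑ k, ‖δ k t‖ ^ 2 ≤ 1))

def auxVec {H : Type*} (M N : ℕ) (a : ℕ → ℕ → H) : PiLp 2 (fun _ : Fin M × Fin N => H) :=
  WithLp.toLp 2 (fun p => a p.1 p.2)

theorem aux_inner_vec {H : Type*} [NormedAddCommGroup H] [InnerProductSpace ℂ H] (M N : ℕ)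
    (a b : ℕ → ℕ → H) : inner ℂ (auxVec M N a) (auxVec M N b) =
      ∑ j ∈ Finset.range M, ∑ l ∈ Finset.range N, inner ℂ (a j l) (b j l) := by
  rw [PiLp.inner_apply, Fintype.sum_prod_type, Finset.sum_range]
  refine Finset.sum_congr rfl fun j _ => ?_
  rw [Finset.sum_range]
  rfl

theorem aux_norm_vec {H : Type*} [NormedAddCommGroup H] [InnerProductSpace ℂ H] (M N : ℕ)
    (a : ℕ → ℕ → H) : ‖auxVec M N a‖ ^ 2 =
      ∑ j ∈ Finset.range M, ∑ l ∈ Finset.range N, ‖a j l‖ ^ 2 := by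
  rw [PiLp.norm_sq_eq_of_L2, Fintype.sum_prod_type, Finset.sum_range]
  refine Finset.sum_congr rfl fun j _ => ?_
  rw [Finset.sum_range]
  rfl

theorem aux_core {S T H : Type*} [NormedAddCommGroup H] [InnerProductSpace ℂ H]
    [FiniteDimensional ℂ H] (n : ℕ) (ψ : Fin n → S × T → ℂ) (N M : ℕ) (hM : 0 < M)
    (hN : M + 3 ^ n ≤ N)
    (X : ℕ → S → H) (Y : ℕ → T → H) (c : ℝ) (hc : c * N ≤ M)
    (hX : ∀ i s, ‖X i s‖ ^ 2 ≤ c) (hY : ∀ i t, ‖Y i t‖ ^ 2 ≤ c)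
    (h0 : ∀ i j s t, i < j → j < N → inner ℂ (X i s) (Y j t) = 0)
    (hψ : ∀ (k : Fin n) j s t, j < M → inner ℂ (X (j + 3 ^ (k : ℕ)) s) (Y j t) = ψ k (s, t)) :
    AuxDec n ψ := by
  classical
  obtain ⟨D, hD1, hD2, hD3, hD4⟩ := aux_filtration N X Y h0
  have hMR : (0 : ℝ) < M := by exact_mod_cast hM
  have hpow : ∀ k : Fin n, M + 3 ^ (k : ℕ) ≤ N := fun k =>
    le_trans (Nat.add_le_add_left (Nat.pow_le_pow_right (by norm_num) k.2.le) _) hN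
  have hMN : M ≤ N := le_trans (Nat.le_add_right _ _) hN
  let r : ℝ := (Real.sqrt M)⁻¹
  have hr2 : r ^ 2 = (M : ℝ)⁻¹ := by
    simp only [r]; rw [inv_pow, Real.sq_sqrt hMR.le]
  let a : Fin n → S → ℕ → ℕ → H := fun k s j l =>
    if 2 * l ≤ 2 * j + 3 ^ (k : ℕ) ∧ j ≤ l then D l (X (j + 3 ^ (k : ℕ)) s) else 0
  let b : T → ℕ → ℕ → H := fun t j l => D l (Y j t)
  let g : S → ℕ → ℕ → H := fun s i l => D l (X i s)
  let e : Fin n → T → ℕ → ℕ → H := fun k t i l =>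
    if 3 ^ (k : ℕ) ≤ i ∧ i < M + 3 ^ (k : ℕ) then
      (if 2 * (i - 3 ^ (k : ℕ)) + 3 ^ (k : ℕ) < 2 * l ∧ l ≤ i then D l (Y (i - 3 ^ (k : ℕ)) t)
        else 0) else 0
  let α' := fun k s => (r : ℂ) • auxVec M N (a k s)
  let β' := fun t => (r : ℂ) • auxVec M N (b t)
  let γ' := fun s => (r : ℂ) • auxVec N N (g s)
  let δ' := fun k t => (r : ℂ) • auxVec N N (e k t)
  have hsm : ∀ {N1 N2 : ℕ} (x : PiLp 2 (fun _ : Fin N1 × Fin N2 => H)),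
      ‖(r : ℂ) • x‖ ^ 2 = (M : ℝ)⁻¹ * ‖x‖ ^ 2 := by
    intro N1 N2 x
    rw [norm_smul, mul_pow, ← hr2]
    simp
  have hin : ∀ {N1 N2 : ℕ} (x y : PiLp 2 (fun _ : Fin N1 × Fin N2 => H)),
      inner ℂ ((r : ℂ) • x) ((r : ℂ) • y) = (M : ℂ)⁻¹ * inner ℂ x y := by
    intro N1 N2 x y
    rw [inner_smul_left, inner_smul_right, Complex.conj_ofReal, ← mul_assoc, ← sq]
    congr 1
    have : ((r ^ 2 : ℝ) : ℂ) = (((M : ℝ)⁻¹ : ℝ) : ℂ) := by rw [hr2]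
    push_cast at this
    exact this
  have hfin : (M : ℝ)⁻¹ * (N * c) ≤ 1 := by
    rw [inv_mul_le_iff₀ hMR]; linarith
  have hXs : ∀ s, ∑ i ∈ Finset.range N, ∑ l ∈ Finset.range N, ‖D l (X i s)‖ ^ 2 ≤ N * c := by
    intro s
    calc _ ≤ ∑ i ∈ Finset.range N, c := Finset.sum_le_sum fun i _ => (hD2 _).trans (hX i s)
      _ = N * c := by simp
  have hYs : ∀ t, ∑ j ∈ Finset.range M, ∑ l ∈ Finset.range N, ‖D l (Y j t)‖ ^ 2 ≤ N * c := by
    intro t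
    calc _ ≤ ∑ i ∈ Finset.range N, ∑ l ∈ Finset.range N, ‖D l (Y i t)‖ ^ 2 := by
          apply Finset.sum_le_sum_of_subset_of_nonneg
          · intro x hx; simp at *; omega
          · intros; positivity
      _ ≤ ∑ i ∈ Finset.range N, c := Finset.sum_le_sum fun i _ => (hD2 _).trans (hY i t)
      _ = N * c := by simp
  have sq1 : ∀ x : ℝ, x ^ 2 ≤ 1 → x ≤ 1 := by
    intro x hx
    nlinarith
  have hα : ∀ s, ∑ k, ‖α' k s‖ ^ 2 ≤ 1 := by
    intro s
    simp only [α', hsm, aux_norm_vec]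
    rw [← Finset.mul_sum]
    refine le_trans (mul_le_mul_of_nonneg_left ?_ (by positivity)) hfin
    refine le_trans ?_ (hXs s)
    calc ∑ k, ∑ j ∈ Finset.range M, ∑ l ∈ Finset.range N, ‖a k s j l‖ ^ 2
        ≤ ∑ k : Fin n, ∑ i ∈ Finset.range N, ∑ l ∈ Finset.range N,
          (if 3 ^ (k : ℕ) ≤ 2 * (i - l) ∧ (i - l) ≤ 3 ^ (k : ℕ) then ‖D l (X i s)‖ ^ 2 else 0) := by
          refine Finset.sum_le_sum fun k _ => ?_
          calc _ ≤ ∑ j ∈ Finset.range M, ∑ l ∈ Finset.range N,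
                (if 3 ^ (k : ℕ) ≤ 2 * ((j + 3 ^ (k : ℕ)) - l) ∧ ((j + 3 ^ (k : ℕ)) - l) ≤ 3 ^ (k : ℕ)
                  then ‖D l (X (j + 3 ^ (k : ℕ)) s)‖ ^ 2 else 0) := by
                refine Finset.sum_le_sum fun j _ => Finset.sum_le_sum fun l _ => ?_
                simp only [a]
                split_ifs with h1 h2 h2
                · exact le_rfl
                · exfalso; omega
                · simp
                · simp
            _ = ∑ i ∈ Finset.range N, (if 3 ^ (k : ℕ) ≤ i ∧ i < M + 3 ^ (k : ℕ) then
                  ∑ l ∈ Finset.range N,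
          (if 3 ^ (k : ℕ) ≤ 2 * (i - l) ∧ (i - l) ≤ 3 ^ (k : ℕ) then ‖D l (X i s)‖ ^ 2 else 0)
                  else 0) := (aux_shift M _ N (hpow k) (fun i => ∑ l ∈ Finset.range N,
          (if 3 ^ (k : ℕ) ≤ 2 * (i - l) ∧ (i - l) ≤ 3 ^ (k : ℕ)
            then ‖D l (X i s)‖ ^ 2 else 0))).symm
            _ ≤ _ := by
                refine Finset.sum_le_sum fun i _ => ?_
                split_ifs
                · exact le_rfl
                · refine Finset.sum_nonneg fun l _ => ?_
                  split_ifs <;> positivity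
      _ = ∑ i ∈ Finset.range N, ∑ l ∈ Finset.range N, ∑ k : Fin n,
          (if 3 ^ (k : ℕ) ≤ 2 * (i - l) ∧ (i - l) ≤ 3 ^ (k : ℕ) then ‖D l (X i s)‖ ^ 2 else 0) := by
          rw [Finset.sum_comm]
          refine Finset.sum_congr rfl fun i _ => ?_
          rw [Finset.sum_comm]
      _ ≤ _ := Finset.sum_le_sum fun i _ => Finset.sum_le_sum fun l _ =>
          aux_uniq n (i - l) _ (by positivity)
  have hβ : ∀ t, ‖β' t‖ ≤ 1 := by
    intro t
    apply sq1
    simp only [β', hsm, aux_norm_vec]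
    exact le_trans (mul_le_mul_of_nonneg_left (hYs t) (by positivity)) hfin
  have hγ : ∀ s, ‖γ' s‖ ≤ 1 := by
    intro s
    apply sq1
    simp only [γ', hsm, aux_norm_vec]
    exact le_trans (mul_le_mul_of_nonneg_left (hXs s) (by positivity)) hfin
  have hδ : ∀ t, ∑ k, ‖δ' k t‖ ^ 2 ≤ 1 := by
    intro t
    simp only [δ', hsm, aux_norm_vec]
    rw [← Finset.mul_sum]
    refine le_trans (mul_le_mul_of_nonneg_left ?_ (by positivity)) hfin
    refine le_trans ?_ (hYs t)
    calc ∑ k, ∑ j ∈ Finset.range N, ∑ l ∈ Finset.range N, ‖e k t j l‖ ^ 2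
        ≤ ∑ k : Fin n, ∑ j ∈ Finset.range M, ∑ l ∈ Finset.range N,
          (if 3 ^ (k : ℕ) ≤ 2 * (l - j) ∧ (l - j) ≤ 3 ^ (k : ℕ) then ‖D l (Y j t)‖ ^ 2 else 0) := by
          refine Finset.sum_le_sum fun k _ => ?_
          have := aux_shift M _ N (hpow k) (fun i => ∑ l ∈ Finset.range N, ‖e k t i l‖ ^ 2)
          calc _ = ∑ i ∈ Finset.range N, (if 3 ^ (k : ℕ) ≤ i ∧ i < M + 3 ^ (k : ℕ) then
                  ∑ l ∈ Finset.range N, ‖e k t i l‖ ^ 2 else 0) := by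
                refine Finset.sum_congr rfl fun i _ => ?_
                split_ifs with h
                · rfl
                · simp [e, h]
            _ = _ := this
            _ ≤ _ := by
                refine Finset.sum_le_sum fun j hj => Finset.sum_le_sum fun l _ => ?_
                rw [Finset.mem_range] at hj
                simp only [e, Nat.add_sub_cancel]
                rw [if_pos (by omega)]
                split_ifs with h1 h2 h2
                · exact le_rfl
                · exfalso; omega
                · simp
                · simp
      _ = ∑ j ∈ Finset.range M, ∑ l ∈ Finset.range N, ∑ k : Fin n,
          (if 3 ^ (k : ℕ) ≤ 2 * (l - j) ∧ (l - j) ≤ 3 ^ (k : ℕ) then ‖D l (Y j t)‖ ^ 2 else 0) := by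
          rw [Finset.sum_comm]
          refine Finset.sum_congr rfl fun i _ => ?_
          rw [Finset.sum_comm]
      _ ≤ _ := Finset.sum_le_sum fun i _ => Finset.sum_le_sum fun l _ =>
          aux_uniq n (l - i) _ (by positivity)
  have hsum : ∀ k s t, ψ k (s, t) = inner ℂ (α' k s) (β' t) + inner ℂ (γ' s) (δ' k t) := by
    intro k s t
    simp only [α', β', γ', δ', hin, aux_inner_vec]
    rw [← mul_add, eq_inv_mul_iff_mul_eq₀ (by exact_mod_cast hM.ne')]
    have h1 : ∑ j ∈ Finset.range N, ∑ l ∈ Finset.range N, inner ℂ (g s j l) (e k t j l)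
        = ∑ j ∈ Finset.range M, ∑ l ∈ Finset.range N,
          inner ℂ (g s (j + 3 ^ (k : ℕ)) l) (e k t (j + 3 ^ (k : ℕ)) l) := by
      rw [← aux_shift M _ N (hpow k)
        (fun i => ∑ l ∈ Finset.range N, inner ℂ (g s i l) (e k t i l))]
      refine Finset.sum_congr rfl fun i _ => ?_
      split_ifs with h
      · rfl
      · simp [e, h]
    rw [h1, ← Finset.sum_add_distrib]
    have h2 : ∀ j ∈ Finset.range M, (∑ l ∈ Finset.range N, inner ℂ (a k s j l) (b t j l)) +
        ∑ l ∈ Finset.range N, inner ℂ (g s (j + 3 ^ (k : ℕ)) l) (e k t (j + 3 ^ (k : ℕ)) l)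
        = ψ k (s, t) := by
      intro j hj
      rw [Finset.mem_range] at hj
      have hk := hpow k
      rw [← hψ k j s t hj, ← hD1 _ _ _ (by omega), ← Finset.sum_add_distrib]
      refine Finset.sum_congr rfl fun l _ => ?_
      simp only [a, b, g, e, Nat.add_sub_cancel]
      rw [if_pos (show 3 ^ (k : ℕ) ≤ j + 3 ^ (k : ℕ) ∧ j + 3 ^ (k : ℕ) < M + 3 ^ (k : ℕ) by omega)]
      by_cases h3 : l < j
      · rw [hD4 l j t h3 (by omega)]; simp
      by_cases h4 : j + 3 ^ (k : ℕ) < l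
      · rw [hD3 l _ s h4]; simp
      by_cases h5 : 2 * l ≤ 2 * j + 3 ^ (k : ℕ)
      · rw [if_pos (by omega), if_neg (by omega)]; simp
      · rw [if_neg (by omega), if_pos (by omega)]; simp
    rw [Finset.sum_congr rfl h2]
    simp
  obtain ⟨d, f, hf1, hf2⟩ := aux_euclid (H := PiLp 2 (fun _ : Fin M × Fin N => H))
  obtain ⟨d', f', hf1', hf2'⟩ := aux_euclid (H := PiLp 2 (fun _ : Fin N × Fin N => H))
  refine ⟨fun k p => inner ℂ (α' k p.1) (β' p.2), fun k p => inner ℂ (γ' p.1) (δ' k p.2),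
    fun k p => hsum k p.1 p.2, ⟨d, fun k s => f (α' k s), fun t => f (β' t), ?_, ?_, ?_⟩,
    ⟨d', fun s => f' (γ' s), fun k t => f' (δ' k t), ?_, ?_, ?_⟩⟩
  · intro k s t; rw [hf1]
  · simpa only [hf2] using hα
  · simpa only [hf2] using hβ
  · intro k s t; rw [hf1']
  · simpa only [hf2'] using hγ
  · simpa only [hf2'] using hδ

theorem aux_unimod {S T : Type*} (n : ℕ) (ψ : Fin n → S × T → ℂ) (ω : Fin n → Circle)
    (h : AuxDec n (fun k p => (ω k : ℂ) * ψ k p)) : AuxDec n ψ := by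
  obtain ⟨A, B, hAB, ⟨d, α, β, h1, h2, h3⟩, ⟨d', γ, δ, h4, h5, h6⟩⟩ := h
  have hω : ∀ k, (starRingEnd ℂ) (ω k : ℂ) * (ω k : ℂ) = 1 := by
    intro k
    rw [mul_comm, Complex.mul_conj, Complex.normSq_eq_norm_sq, Circle.norm_coe]
    simp
  refine ⟨fun k p => (starRingEnd ℂ) (ω k : ℂ) * A k p, fun k p => (starRingEnd ℂ) (ω k : ℂ) * B k p,
    ?_, ⟨d, fun k s => (ω k : ℂ) • α k s, β, ?_, ?_, h3⟩,
    ⟨d', γ, fun k t => (starRingEnd ℂ) (ω k : ℂ) • δ k t, ?_, h5, ?_⟩⟩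
  · intro k p
    rw [← mul_add, ← hAB, ← mul_assoc, hω, one_mul]
  · intro k s t
    simp only [h1, inner_smul_left]
  · intro s
    simpa [norm_smul, Circle.norm_coe] using h2 s
  · intro k s t
    simp only [h4, inner_smul_right]
  · intro s
    simpa [norm_smul, Circle.norm_coe] using h6 s

theorem aux_gamma_set_nonempty {S T : Type*} [Fintype S] (ψ : S × T → ℂ) :
    { c : ℝ |
    ∃ (d : ℕ) (x : S → EuclideanSpace ℂ (Fin d)) (y : T → EuclideanSpace ℂ (Fin d)),
      (∀ s t, ψ (s, t) = inner (𝕜 := ℂ) (x s) (y t)) ∧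
      c = (⨆ s, ‖x s‖) * (⨆ t, ‖y t‖) }.Nonempty := by
  classical
  obtain ⟨d, f, hf1, hf2⟩ := aux_euclid (H := EuclideanSpace ℂ S)
  refine ⟨_, d, fun s => f (EuclideanSpace.single s 1),
    fun t => f (WithLp.toLp 2 fun s => ψ (s, t)), ?_, rfl⟩
  intro s t
  rw [hf1]
  simp [EuclideanSpace.inner_single_left]

theorem aux_gamma_bdd {S T : Type*} (ψ : S × T → ℂ) :
    BddBelow { c : ℝ |
    ∃ (d : ℕ) (x : S → EuclideanSpace ℂ (Fin d)) (y : T → EuclideanSpace ℂ (Fin d)),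
      (∀ s t, ψ (s, t) = inner (𝕜 := ℂ) (x s) (y t)) ∧
      c = (⨆ s, ‖x s‖) * (⨆ t, ‖y t‖) } := by
  refine ⟨0, ?_⟩
  rintro c ⟨d, x, y, -, rfl⟩
  exact mul_nonneg (Real.iSup_nonneg fun _ => norm_nonneg _)
    (Real.iSup_nonneg fun _ => norm_nonneg _)

theorem aux_gamma_nonneg {S T : Type*} (ψ : S × T → ℂ) : 0 ≤ gamma2 ψ := by
  apply Real.sInf_nonneg
  rintro c ⟨d, x, y, -, rfl⟩
  exact mul_nonneg (Real.iSup_nonneg fun _ => norm_nonneg _)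
    (Real.iSup_nonneg fun _ => norm_nonneg _)

theorem aux_gamma_le {S T H : Type*} [Nonempty S] [Nonempty T]
    [NormedAddCommGroup H] [InnerProductSpace ℂ H]
    [FiniteDimensional ℂ H] (ψ : S × T → ℂ) (w : ℝ) (x : S → H) (y : T → H)
    (h : ∀ s t, ψ (s, t) = inner ℂ (x s) (y t)) (hx : ∀ s, ‖x s‖ ^ 2 ≤ w)
    (hy : ∀ t, ‖y t‖ ^ 2 ≤ w) : gamma2 ψ ≤ w := by
  obtain ⟨d, f, hf1, hf2⟩ := aux_euclid (H := H)
  have hw : 0 ≤ w := le_trans (sq_nonneg _) (hx (Classical.arbitrary S))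
  refine le_trans (csInf_le (aux_gamma_bdd ψ) ⟨d, fun s => f (x s), fun t => f (y t), ?_, rfl⟩) ?_
  · intro s t; rw [hf1]; exact h s t
  · simp only [hf2]
    calc _ ≤ Real.sqrt w * Real.sqrt w := by
          refine mul_le_mul (ciSup_le fun s => Real.le_sqrt_of_sq_le (hx s))
            (ciSup_le fun s => Real.le_sqrt_of_sq_le (hy s))
            (Real.iSup_nonneg fun _ => norm_nonneg _) (Real.sqrt_nonneg _)
      _ = w := Real.mul_self_sqrt hw

theorem aux_gamma_lt {S T : Type*} [Fintype S] [Fintype T] (ψ : S × T → ℂ) (w : ℝ)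
    (h : gamma2 ψ < w) :
    ∃ (d : ℕ) (x : S → EuclideanSpace ℂ (Fin d)) (y : T → EuclideanSpace ℂ (Fin d)),
      (∀ s t, ψ (s, t) = inner ℂ (x s) (y t)) ∧ (∀ s, ‖x s‖ ^ 2 ≤ w) ∧ (∀ t, ‖y t‖ ^ 2 ≤ w) := by
  have hw : 0 < w := lt_of_le_of_lt (aux_gamma_nonneg ψ) h
  obtain ⟨c, ⟨d, x, y, hxy, rfl⟩, hc⟩ := exists_lt_of_csInf_lt (aux_gamma_set_nonempty ψ) h
  have hxa : ∀ s, ‖x s‖ ≤ ⨆ s, ‖x s‖ := fun s =>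
    le_ciSup (f := fun s => ‖x s‖) (Set.finite_range _).bddAbove s
  have hyb : ∀ t, ‖y t‖ ≤ ⨆ t, ‖y t‖ := fun s =>
    le_ciSup (f := fun s => ‖y s‖) (Set.finite_range _).bddAbove s
  have ha0 : 0 ≤ ⨆ s, ‖x s‖ := Real.iSup_nonneg fun _ => norm_nonneg _
  have hb0 : 0 ≤ ⨆ s, ‖y s‖ := Real.iSup_nonneg fun _ => norm_nonneg _
  generalize (⨆ s, ‖x s‖) = a at *
  generalize (⨆ s, ‖y s‖) = b at *
  rcases ha0.eq_or_lt with ha | ha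
  · refine ⟨d, fun _ => 0, fun _ => 0, ?_, ?_, ?_⟩
    · intro s t
      have : x s = 0 := by
        rw [← norm_le_zero_iff, ha]; exact hxa s
      rw [hxy, this]; simp
    · intro s; simp [hw.le]
    · intro s; simp [hw.le]
  · have hsw : 0 < Real.sqrt w := Real.sqrt_pos.2 hw
    have hsq : Real.sqrt w ^ 2 = w := Real.sq_sqrt hw.le
    refine ⟨d, fun s => ((Real.sqrt w / a : ℝ) : ℂ) • x s,
      fun t => ((a / Real.sqrt w : ℝ) : ℂ) • y t, ?_, ?_, ?_⟩
    · intro s t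
      rw [inner_smul_left, inner_smul_right, Complex.conj_ofReal, ← mul_assoc, ← Complex.ofReal_mul,
        hxy]
      have : Real.sqrt w / a * (a / Real.sqrt w) = 1 := by field_simp
      rw [this]; simp
    · intro s
      rw [norm_smul, Complex.norm_real, Real.norm_of_nonneg (by positivity)]
      calc _ ≤ (Real.sqrt w / a * a) ^ 2 := by
            gcongr; exact hxa s
        _ = w := by rw [div_mul_cancel₀ _ ha.ne', hsq]
    · intro t
      rw [norm_smul, Complex.norm_real, Real.norm_of_nonneg (by positivity)]
      calc _ ≤ (a / Real.sqrt w * b) ^ 2 := by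
            gcongr; exact hyb t
        _ ≤ (Real.sqrt w) ^ 2 := by
            gcongr
            rw [div_mul_eq_mul_div, div_le_iff₀ hsw, ← sq, hsq]; exact hc.le
        _ = w := hsq

theorem aux_gamma_add {S T : Type*} [Fintype S] [Fintype T] [Nonempty S] [Nonempty T]
    (f g : S × T → ℂ) : gamma2 (f + g) ≤ gamma2 f + gamma2 g := by
  refine le_of_forall_pos_le_add fun ε hε => ?_
  obtain ⟨d, x, y, h1, h2, h3⟩ := aux_gamma_lt f (gamma2 f + ε / 2) (by linarith)
  obtain ⟨d', x', y', h1', h2', h3'⟩ := aux_gamma_lt g (gamma2 g + ε / 2) (by linarith)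
  refine aux_gamma_le (H := WithLp 2 (EuclideanSpace ℂ (Fin d) × EuclideanSpace ℂ (Fin d')))
    _ _ (fun s => WithLp.toLp 2 (x s, x' s)) (fun s => WithLp.toLp 2 (y s, y' s)) ?_ ?_ ?_
  · intro s t
    rw [WithLp.prod_inner_apply, Pi.add_apply, h1, h1']
  · intro s
    rw [WithLp.prod_norm_sq_eq_of_L2]
    change ‖x s‖ ^ 2 + ‖x' s‖ ^ 2 ≤ _
    have := h2 s
    have := h2' s
    linarith
  · intro s
    rw [WithLp.prod_norm_sq_eq_of_L2]
    change ‖y s‖ ^ 2 + ‖y' s‖ ^ 2 ≤ _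
    have := h3 s
    have := h3' s
    linarith

theorem aux_gamma_le_sum {S T : Type*} [Fintype S] [Fintype T] [Nonempty S] [Nonempty T]
    (f : S × T → ℂ) : gamma2 f ≤ ∑ p, ‖f p‖ := by
  classical
  refine le_of_forall_pos_le_add fun ε hε => ?_
  have h0 : 0 ≤ ∑ p, ‖f p‖ := Finset.sum_nonneg fun _ _ => norm_nonneg _
  set w := ∑ p, ‖f p‖ + ε with hw
  have hw0 : 0 < w := by linarith
  have hsw : 0 < Real.sqrt w := Real.sqrt_pos.2 hw0
  have hsq : Real.sqrt w ^ 2 = w := Real.sq_sqrt hw0.le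
  refine aux_gamma_le (H := EuclideanSpace ℂ S) f w
    (fun s => ((Real.sqrt w : ℝ) : ℂ) • EuclideanSpace.single s 1)
    (fun t => (((Real.sqrt w)⁻¹ : ℝ) : ℂ) • (WithLp.toLp 2 fun s => f (s, t))) ?_ ?_ ?_
  · intro s t
    rw [inner_smul_left, inner_smul_right, Complex.conj_ofReal, ← mul_assoc, ← Complex.ofReal_mul,
      mul_inv_cancel₀ hsw.ne']
    simp [EuclideanSpace.inner_single_left]
  · intro s
    rw [norm_smul, Complex.norm_real, Real.norm_of_nonneg hsw.le]
    simp [hsq]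
  · intro t
    rw [norm_smul, Complex.norm_real, Real.norm_of_nonneg (by positivity), mul_pow, inv_pow, hsq,
      EuclideanSpace.norm_sq_eq, inv_mul_le_iff₀ hw0]
    simp only
    calc ∑ s, ‖f (s, t)‖ ^ 2 ≤ (∑ s, ‖f (s, t)‖) ^ 2 :=
          Finset.sum_sq_le_sq_sum_of_nonneg fun _ _ => norm_nonneg _
      _ ≤ w ^ 2 := by
          have : ∑ s, ‖f (s, t)‖ ≤ w := by
            refine le_trans ?_ (show ∑ p, ‖f p‖ ≤ w by linarith)
            rw [Fintype.sum_prod_type]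
            refine Finset.sum_le_sum fun s _ => ?_
            exact Finset.single_le_sum (f := fun t => ‖f (s, t)‖)
              (fun _ _ => norm_nonneg _) (Finset.mem_univ t)
          have h1 : 0 ≤ ∑ s, ‖f (s, t)‖ := Finset.sum_nonneg fun _ _ => norm_nonneg _
          gcongr
      _ = w * w := sq w

theorem aux_gamma_cont {S T : Type*} [Fintype S] [Fintype T] [Nonempty S] [Nonempty T] :
    Continuous (gamma2 : (S × T → ℂ) → ℝ) := by
  have key : ∀ f g : S × T → ℂ, gamma2 f - gamma2 g ≤ ∑ p, ‖f p - g p‖ := by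
    intro f g
    have h1 := aux_gamma_add g (f - g)
    have h2 := aux_gamma_le_sum (f - g)
    rw [add_sub_cancel] at h1
    simp only [Pi.sub_apply] at h2
    linarith
  rw [continuous_iff_continuousAt]
  intro g
  unfold ContinuousAt
  rw [tendsto_iff_norm_sub_tendsto_zero]
  have hc : Continuous fun f : S × T → ℂ => ∑ p, ‖f p - g p‖ := by fun_prop
  have := hc.tendsto g
  simp only [sub_self, norm_zero, Finset.sum_const_zero] at this
  refine squeeze_zero (fun _ => norm_nonneg _) (fun f => ?_) this
  rw [Real.norm_eq_abs, abs_le]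
  have h1 := key f g
  have h2 := key g f
  simp only [norm_sub_rev (g _)] at h2
  constructor <;> linarith

theorem aux_roots (R : ℕ) (ζ : ℂ) (hζ : IsPrimitiveRoot ζ R) (hR : R ≠ 0) (i m : ℕ)
    (h1 : i < m + R) (h2 : m < i + R) :
    ∑ r : Fin R, (starRingEnd ℂ) (ζ ^ ((r : ℕ) * i)) * ζ ^ ((r : ℕ) * m) =
      if i = m then (R : ℂ) else 0 := by
  have hn : ‖ζ‖ = 1 := hζ.norm'_eq_one hR
  have h0 : ζ ≠ 0 := by rintro rfl; simp at hn
  have hconj : (starRingEnd ℂ) ζ = ζ⁻¹ := by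
    rw [Complex.inv_def, Complex.normSq_eq_norm_sq, hn]; simp
  have hq : ∀ r : ℕ, (starRingEnd ℂ) (ζ ^ (r * i)) * ζ ^ (r * m) = (ζ ^ ((m : ℤ) - i)) ^ r := by
    intro r
    rw [map_pow, hconj, zpow_sub₀ h0, div_pow, zpow_natCast, zpow_natCast, ← pow_mul, ← pow_mul,
      inv_pow, mul_comm r i, mul_comm r m, div_eq_mul_inv, mul_comm]
  simp only [hq]
  rw [← Finset.sum_range (fun r => (ζ ^ ((m : ℤ) - i)) ^ r)]
  split_ifs with h
  · subst h; simp
  · have hne : ζ ^ ((m : ℤ) - i) ≠ 1 := by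
      rw [Ne, hζ.zpow_eq_one_iff_dvd]
      intro hd
      have := Int.eq_zero_of_abs_lt_dvd hd (by rw [abs_lt]; omega)
      omega
    rw [geom_sum_eq hne, ← zpow_natCast, ← zpow_mul, mul_comm, zpow_mul, zpow_natCast, hζ.pow_eq_one]
    simp

/-- Theorem 2.2 (i): if `∫_{𝕋^n} γ₂(Σ_k z_k ψ_k) dμ(z) < 1` then the `ψ_k`
decompose as `ψ_k = A_k + B_k` where `(A_k)` factors with column-square bound 1 and
`(B_k)` factors with row-square bound 1. -/
theorem stmt_12 {S T : Type*} [Fintype S] [Fintype T] [Nonempty S] [Nonempty T]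
    [MeasurableSpace Circle] [BorelSpace Circle]
    (m : Measure Circle) [m.IsHaarMeasure] [IsProbabilityMeasure m]
    (n : ℕ) (ψ : Fin n → S × T → ℂ)
    (h : (∫ z : Fin n → Circle, gamma2 (fun p => ∑ k, (z k : ℂ) * ψ k p)
        ∂(Measure.pi fun _ : Fin n => m)) < 1) :
    ∃ A B : Fin n → S × T → ℂ,
      (∀ k p, ψ k p = A k p + B k p) ∧
      (∃ (d : ℕ) (α : Fin n → S → EuclideanSpace ℂ (Fin d))
          (β : T → EuclideanSpace ℂ (Fin d)),
        (∀ k s t, A k (s, t) = inner (𝕜 := ℂ) (α k s) (β t)) ∧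
        (∀ s, ∑ k, ‖α k s‖ ^ 2 ≤ 1) ∧ (∀ t, ‖β t‖ ≤ 1)) ∧
      (∃ (d' : ℕ) (γ : S → EuclideanSpace ℂ (Fin d'))
          (δ : Fin n → T → EuclideanSpace ℂ (Fin d')),
        (∀ k s t, B k (s, t) = inner (𝕜 := ℂ) (γ s) (δ k t)) ∧
        (∀ s, ‖γ s‖ ≤ 1) ∧ (∀ t, ∑ k, ‖δ k t‖ ^ 2 ≤ 1)) := by
  classical
  change AuxDec n ψ
  set G : (Fin n → Circle) → ℝ := fun z => gamma2 (fun p => ∑ k, (z k : ℂ) * ψ k p) with hG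
  set I : ℝ := ∫ z, G z ∂(Measure.pi fun _ : Fin n => m) with hI
  have hGc : Continuous G := by
    apply aux_gamma_cont.comp
    fun_prop
  have hGi : ∀ g : Fin n → Circle, Integrable (fun z => G (g * z))
      (Measure.pi fun _ : Fin n => m) := by
    intro g
    refine Continuous.integrable_of_hasCompactSupport (by fun_prop) ?_
    exact HasCompactSupport.of_compactSpace _
  obtain ⟨c, hIc, hc1⟩ := exists_between h
  obtain ⟨M, hM⟩ := exists_nat_gt (max 0 (c * 3 ^ n / (1 - c)))
  have hM0 : 0 < M := by
    have := lt_of_le_of_lt (le_max_left _ _) hM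
    exact_mod_cast this
  have hM1 : c * ((M + 3 ^ n : ℕ) : ℝ) ≤ M := by
    have := lt_of_le_of_lt (le_max_right _ _) hM
    rw [div_lt_iff₀ (by linarith)] at this
    push_cast
    linarith
  have hp : ∀ k : ℕ, 0 < 3 ^ k := fun k => by positivity
  have hpn := hp n
  set N := M + 3 ^ n with hN
  set R := N + 3 ^ n with hR
  have hR0 : R ≠ 0 := by omega
  have hRR : (0 : ℝ) < R := by exact_mod_cast Nat.pos_of_ne_zero hR0
  let ζ : Circle := Circle.exp (2 * Real.pi / R)
  have hζ : IsPrimitiveRoot (ζ : ℂ) R := by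
    have := Complex.isPrimitiveRoot_exp R hR0
    convert this using 1
    simp only [ζ, Circle.coe_exp]
    congr 1
    push_cast
    ring
  let g : Fin R → Fin n → Circle := fun r k => ζ ^ ((r : ℕ) * 3 ^ (k : ℕ))
  have hint : ∫ z, ∑ r, G (g r * z) ∂(Measure.pi fun _ : Fin n => m) = R * I := by
    rw [integral_finsetSum _ fun r _ => hGi (g r)]
    simp only [integral_mul_left_eq_self]
    simp [hI]
  obtain ⟨ω, hω⟩ := exists_le_integral (integrable_finsetSum Finset.univ fun r _ => hGi (g r))
  rw [hint] at hω
  apply aux_unimod n ψ ω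
  have hex : ∀ r, ∃ (d : ℕ) (x : S → EuclideanSpace ℂ (Fin d)) (y : T → EuclideanSpace ℂ (Fin d)),
      (∀ s t, ∑ k, ((g r * ω) k : ℂ) * ψ k (s, t) = inner ℂ (x s) (y t)) ∧
      (∀ s, ‖x s‖ ^ 2 ≤ G (g r * ω) + (c - I)) ∧ (∀ t, ‖y t‖ ^ 2 ≤ G (g r * ω) + (c - I)) := by
    intro r
    exact aux_gamma_lt (fun p => ∑ k, ((g r * ω) k : ℂ) * ψ k p) (G (g r * ω) + (c - I)) (by
      change G (g r * ω) < _
      linarith)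
  choose d x y hxy hx hy using hex
  let q : ℝ := (Real.sqrt R)⁻¹
  have hq2 : q ^ 2 = (R : ℝ)⁻¹ := by
    simp only [q]; rw [inv_pow, Real.sq_sqrt hRR.le]
  have hq2c : (q : ℂ) * (q : ℂ) = (R : ℂ)⁻¹ := by
    have : ((q ^ 2 : ℝ) : ℂ) = (((R : ℝ)⁻¹ : ℝ) : ℂ) := by rw [hq2]
    push_cast at this
    rw [← sq]; exact this
  have hsumw : (R : ℝ)⁻¹ * ∑ r, (G (g r * ω) + (c - I)) ≤ c := by
    rw [inv_mul_le_iff₀ hRR, Finset.sum_add_distrib]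
    simp
    linarith
  let X : ℕ → S → PiLp 2 (fun r : Fin R => EuclideanSpace ℂ (Fin (d r))) := fun i s =>
    WithLp.toLp 2 fun r => ((q : ℂ) * (ζ : ℂ) ^ ((r : ℕ) * i)) • x r s
  let Y : ℕ → T → PiLp 2 (fun r : Fin R => EuclideanSpace ℂ (Fin (d r))) := fun i t =>
    WithLp.toLp 2 fun r => ((q : ℂ) * (ζ : ℂ) ^ ((r : ℕ) * i)) • y r t
  have hnq : ∀ i : ℕ, ‖(q : ℂ) * (ζ : ℂ) ^ i‖ ^ 2 = (R : ℝ)⁻¹ := by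
    intro i
    rw [norm_mul, norm_pow, Circle.norm_coe, one_pow, mul_one, Complex.norm_real, ← hq2]
    simp
  have hin : ∀ i j s t, i < N → j < N → inner ℂ (X i s) (Y j t)
      = ∑ k : Fin n, if i = j + 3 ^ (k : ℕ) then (ω k : ℂ) * ψ k (s, t) else 0 := by
    intro i j s t hi hj
    rw [PiLp.inner_apply]
    calc _ = ∑ r : Fin R, ∑ k : Fin n, (R : ℂ)⁻¹ * ((ω k : ℂ) * ψ k (s, t)) *
          ((starRingEnd ℂ) ((ζ : ℂ) ^ ((r : ℕ) * i)) * (ζ : ℂ) ^ ((r : ℕ) * (j + 3 ^ (k : ℕ)))) := by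
          refine Finset.sum_congr rfl fun r _ => ?_
          simp only [X, Y]
          rw [inner_smul_left, inner_smul_right, ← hxy, Finset.mul_sum, Finset.mul_sum]
          refine Finset.sum_congr rfl fun k _ => ?_
          rw [← hq2c, map_mul, Complex.conj_ofReal]
          simp only [g, Pi.mul_apply, Circle.coe_mul, Circle.coe_pow]
          ring
      _ = _ := by
          rw [Finset.sum_comm]
          refine Finset.sum_congr rfl fun k _ => ?_
          have hk : 3 ^ (k : ℕ) ≤ 3 ^ n := Nat.pow_le_pow_right (by norm_num) k.2.le
          have hkp := hp k
          rw [← Finset.mul_sum, aux_roots R (ζ : ℂ) hζ hR0 i _ (by omega) (by omega)]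
          have : (R : ℂ) ≠ 0 := by exact_mod_cast hR0
          split_ifs
          · field_simp
          · simp
  refine aux_core n _ N M hM0 le_rfl X Y c hM1 ?_ ?_ ?_ ?_
  · intro i s
    rw [PiLp.norm_sq_eq_of_L2]
    refine le_trans ?_ hsumw
    rw [Finset.mul_sum]
    refine Finset.sum_le_sum fun r _ => ?_
    simp only [X]
    rw [norm_smul, mul_pow, hnq]
    exact mul_le_mul_of_nonneg_left (hx r s) (by positivity)
  · intro i s
    rw [PiLp.norm_sq_eq_of_L2]
    refine le_trans ?_ hsumw
    rw [Finset.mul_sum]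
    refine Finset.sum_le_sum fun r _ => ?_
    simp only [Y]
    rw [norm_smul, mul_pow, hnq]
    exact mul_le_mul_of_nonneg_left (hy r s) (by positivity)
  · intro i j s t hij hj
    rw [hin i j s t (by omega) hj]
    refine Finset.sum_eq_zero fun k _ => ?_
    have := hp k
    rw [if_neg (by omega)]
  · intro k j s t hj
    have hk : 3 ^ (k : ℕ) ≤ 3 ^ n := Nat.pow_le_pow_right (by norm_num) k.2.le
    rw [hin _ j s t (by omega) (by omega), Finset.sum_eq_single k]
    · simp
    · intro b _ hb
      rw [if_neg]
      intro heq
      apply hb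
      have h3 : 3 ^ (k : ℕ) = 3 ^ (b : ℕ) := by omega
      exact (Fin.ext (Nat.pow_right_injective (le_refl _ |>.trans (by norm_num)) h3)).symm
    · simp
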